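/- Suppose δ_j < 1/2. Then the perturbed reduced resolvent R̂_j = Σ_{k≠j} (λ̂_k − λ_j)^{-1} P̂_k satisfies, for every integer k ≥ 1, ‖|R_j|^{-1/2} R̂_j^k‖_∞ ≤ (1 − δ_j)^{−k} g_j^{−k+1/2}. -/

import Mathlib

open Matrix Finset

noncomputable def opNorm {d : ℕ} (A : Matrix (Fin d) (Fin d) ℝ) : ℝ :=
  ‖Matrix.toEuclideanCLM (𝕜 := ℝ) A‖

noncomputable def hsNorm {d : ℕ} (A : Matrix (Fin d) (Fin d) ℝ) : ℝ :=
  Real.sqrt (Matrix.trace (Aᵀ * A))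

noncomputable def proj {d : ℕ} (u : Fin d → ℝ) : Matrix (Fin d) (Fin d) ℝ :=
  Matrix.vecMulVec u u

/-- `|R_j|^{1/2}` : square root of the absolute value of the reduced resolvent. -/
noncomputable def sqrtAbsRes {d : ℕ} (lam : Fin d → ℝ) (u : Fin d → Fin d → ℝ)
    (j : Fin d) : Matrix (Fin d) (Fin d) ℝ :=
  ∑ k ∈ Finset.univ.filter (fun k => k ≠ j), (Real.sqrt |lam k - lam j|)⁻¹ • proj (u k)

/-- `|R_j|^{-1/2}`. -/
noncomputable def invSqrtAbsRes {d : ℕ} (lam : Fin d → ℝ) (u : Fin d → Fin d → ℝ)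
    (j : Fin d) : Matrix (Fin d) (Fin d) ℝ :=
  ∑ k ∈ Finset.univ.filter (fun k => k ≠ j), Real.sqrt |lam k - lam j| • proj (u k)

/-- the reduced resolvent `R_j`. -/
noncomputable def res {d : ℕ} (lam : Fin d → ℝ) (u : Fin d → Fin d → ℝ)
    (j : Fin d) : Matrix (Fin d) (Fin d) ℝ :=
  ∑ k ∈ Finset.univ.filter (fun k => k ≠ j), (lam k - lam j)⁻¹ • proj (u k)

/-- `δ_j`. -/
noncomputable def delta {d : ℕ} (lam : Fin d → ℝ) (u : Fin d → Fin d → ℝ) (j : Fin d)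
    (gj : ℝ) (E : Matrix (Fin d) (Fin d) ℝ) : ℝ :=
  opNorm ((sqrtAbsRes lam u j + (Real.sqrt gj)⁻¹ • proj (u j)) * E *
    (sqrtAbsRes lam u j + (Real.sqrt gj)⁻¹ • proj (u j)))

/-- `δ'_j`. -/
noncomputable def delta' {d : ℕ} (lam : Fin d → ℝ) (u : Fin d → Fin d → ℝ) (j : Fin d)
    (gj : ℝ) (E : Matrix (Fin d) (Fin d) ℝ) : ℝ :=
  max (opNorm (sqrtAbsRes lam u j * E * sqrtAbsRes lam u j))
    (max ((Real.sqrt gj)⁻¹ * hsNorm (sqrtAbsRes lam u j * E * proj (u j)))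
      (gj⁻¹ * hsNorm (proj (u j) * E * proj (u j))))

section OrthonormalFamily

variable {d : ℕ} {u : Fin d → Fin d → ℝ}

theorem dotProduct_eq_sum_of_orthonormal
    (hu : ∀ k l, u k ⬝ᵥ u l = if k = l then (1 : ℝ) else 0) (x y : Fin d → ℝ) :
    x ⬝ᵥ y = ∑ l, (u l ⬝ᵥ x) * (u l ⬝ᵥ y) := by
  have h1 : (Matrix.of u) * (Matrix.of u)ᵀ = 1 := by
    ext k l
    rw [Matrix.mul_apply', Matrix.one_apply]
    exact hu k l
  have h2 : (Matrix.of u)ᵀ * Matrix.of u = 1 := mul_eq_one_comm.mp h1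
  calc x ⬝ᵥ y = x ⬝ᵥ (((Matrix.of u)ᵀ * Matrix.of u) *ᵥ y) := by rw [h2, Matrix.one_mulVec]
    _ = (Matrix.of u *ᵥ x) ⬝ᵥ (Matrix.of u *ᵥ y) := by
      rw [← Matrix.mulVec_mulVec, Matrix.dotProduct_mulVec, Matrix.vecMul_transpose]
    _ = ∑ l, (u l ⬝ᵥ x) * (u l ⬝ᵥ y) := rfl

theorem proj_mulVec (a x : Fin d → ℝ) : proj a *ᵥ x = (a ⬝ᵥ x) • a := by
  simp [proj, Matrix.vecMulVec_mulVec]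

theorem sum_smul_proj_mulVec (s : Finset (Fin d)) (f : Fin d → ℝ) (x : Fin d → ℝ) :
    (∑ k ∈ s, f k • proj (u k)) *ᵥ x = ∑ k ∈ s, (f k * (u k ⬝ᵥ x)) • u k := by
  simp [Matrix.sum_mulVec, Matrix.smul_mulVec, proj_mulVec, smul_smul]

theorem dotProduct_sum_smul_of_orthonormal
    (hu : ∀ k l, u k ⬝ᵥ u l = if k = l then (1 : ℝ) else 0) (s : Finset (Fin d))
    (c : Fin d → ℝ) (l : Fin d) :
    u l ⬝ᵥ (∑ k ∈ s, c k • u k) = if l ∈ s then c l else 0 := by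
  simp [dotProduct_sum, dotProduct_smul, hu]

theorem dotProduct_sum_smul_proj_mulVec
    (hu : ∀ k l, u k ⬝ᵥ u l = if k = l then (1 : ℝ) else 0) (s : Finset (Fin d))
    (f : Fin d → ℝ) (x : Fin d → ℝ) (l : Fin d) :
    u l ⬝ᵥ ((∑ k ∈ s, f k • proj (u k)) *ᵥ x) = if l ∈ s then f l * (u l ⬝ᵥ x) else 0 := by
  rw [sum_smul_proj_mulVec, dotProduct_sum_smul_of_orthonormal hu]

theorem eq_of_dotProduct_eq_of_orthonormal
    (hu : ∀ k l, u k ⬝ᵥ u l = if k = l then (1 : ℝ) else 0) {x y : Fin d → ℝ}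
    (h : ∀ l, u l ⬝ᵥ x = u l ⬝ᵥ y) : x = y := by
  refine dotProduct_eq x y fun z => ?_
  rw [dotProduct_eq_sum_of_orthonormal hu, dotProduct_eq_sum_of_orthonormal hu]
  simp only [h]

theorem sum_proj_eq_one (hu : ∀ k l, u k ⬝ᵥ u l = if k = l then (1 : ℝ) else 0) :
    ∑ k, proj (u k) = 1 := by
  refine Matrix.ext_of_mulVec_single fun i => ?_
  refine eq_of_dotProduct_eq_of_orthonormal hu fun l => ?_
  rw [Matrix.one_mulVec]
  simpa only [one_smul, one_mul, Finset.mem_univ, if_true] using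
    dotProduct_sum_smul_proj_mulVec hu Finset.univ (fun _ => 1) (Pi.single i 1) l

theorem exists_ne_zero_of_card_lt {v : Fin d → Fin d → ℝ} (s t : Finset (Fin d))
    (hst : s.card + t.card < d) :
    ∃ x : Fin d → ℝ, x ≠ 0 ∧ (∀ k ∈ s, u k ⬝ᵥ x = 0) ∧ ∀ k ∈ t, v k ⬝ᵥ x = 0 := by
  let A : Matrix (s ⊕ t) (Fin d) ℝ := Matrix.of (Sum.elim (fun k => u k) (fun k => v k))
  have hker : LinearMap.ker A.mulVecLin ≠ ⊥ :=
    LinearMap.ker_ne_bot_of_finrank_lt (by simpa using hst)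
  obtain ⟨x, hx, hx0⟩ := Submodule.exists_mem_ne_zero_of_ne_bot hker
  have hA : A *ᵥ x = 0 := by simpa using hx
  exact ⟨x, hx0, fun k hk => congrFun hA (Sum.inl ⟨k, hk⟩),
    fun k hk => congrFun hA (Sum.inr ⟨k, hk⟩)⟩

end OrthonormalFamily

theorem norm_toLp_sq_eq_dotProduct {d : ℕ} (x : Fin d → ℝ) :
    ‖WithLp.toLp 2 x‖ ^ 2 = x ⬝ᵥ x := by
  rw [EuclideanSpace.real_norm_sq_eq]
  simp [dotProduct, sq]

theorem opNorm_le_of_dotProduct_le {d : ℕ} {A : Matrix (Fin d) (Fin d) ℝ} {C : ℝ} (hC : 0 ≤ C)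
    (h : ∀ x, (A *ᵥ x) ⬝ᵥ (A *ᵥ x) ≤ C ^ 2 * (x ⬝ᵥ x)) : opNorm A ≤ C := by
  refine ContinuousLinearMap.opNorm_le_bound _ hC fun x => ?_
  refine le_of_sq_le_sq ?_ (by positivity)
  have := h x.ofLp
  rwa [← norm_toLp_sq_eq_dotProduct, ← norm_toLp_sq_eq_dotProduct, ← mul_pow] at this

theorem dotProduct_mulVec_self_le {d : ℕ} (A : Matrix (Fin d) (Fin d) ℝ) (x : Fin d → ℝ) :
    (A *ᵥ x) ⬝ᵥ (A *ᵥ x) ≤ opNorm A ^ 2 * (x ⬝ᵥ x) := by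
  rw [← norm_toLp_sq_eq_dotProduct, ← norm_toLp_sq_eq_dotProduct, ← mul_pow,
    ← Matrix.toEuclideanCLM_toLp (𝕜 := ℝ)]
  exact pow_le_pow_left₀ (norm_nonneg _) (ContinuousLinearMap.le_opNorm _ _) 2

theorem opNorm_mul_le {d : ℕ} (A B : Matrix (Fin d) (Fin d) ℝ) :
    opNorm (A * B) ≤ opNorm A * opNorm B := by
  simpa [opNorm] using
    norm_mul_le (Matrix.toEuclideanCLM (𝕜 := ℝ) A) (Matrix.toEuclideanCLM (𝕜 := ℝ) B)

theorem opNorm_mul_pow_succ_le {d : ℕ} {A B : Matrix (Fin d) (Fin d) ℝ} {a b : ℝ}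
    (hAB : opNorm (A * B) ≤ a) (hB : opNorm B ≤ b) (n : ℕ) :
    opNorm (A * B ^ (n + 1)) ≤ a * b ^ n := by
  induction n with
  | zero => simpa using hAB
  | succ n ih =>
    rw [pow_succ B, ← mul_assoc, pow_succ b, ← mul_assoc]
    exact (opNorm_mul_le _ _).trans
      (mul_le_mul ih hB (norm_nonneg _) ((norm_nonneg _).trans ih))

/-- Reflecting in `f` turns an upper bound for the product of two functionals into a lower bound,
provided the functionals make a non-obtuse angle. -/
theorem neg_mul_le_of_mul_le {ι : Type*} (s : Finset ι) (y f h : ι → ℝ)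
    (hy : ∀ k ∈ s, 0 < y k) (hfh : 0 ≤ ∑ k ∈ s, f k * h k / y k)
    (H : ∀ c : ι → ℝ, (∑ k ∈ s, f k * c k) * (∑ k ∈ s, h k * c k) ≤ ∑ k ∈ s, y k * c k ^ 2)
    (c : ι → ℝ) :
    -((∑ k ∈ s, f k * c k) * (∑ k ∈ s, h k * c k)) ≤ ∑ k ∈ s, y k * c k ^ 2 := by
  set F := ∑ k ∈ s, f k * c k with hF
  set N := ∑ k ∈ s, f k ^ 2 / y k with hN
  have hN0 : 0 ≤ N := Finset.sum_nonneg fun k hk => div_nonneg (sq_nonneg _) (hy k hk).le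
  rcases hN0.eq_or_lt with hN0 | hN0
  · have hf : ∀ k ∈ s, f k = 0 := fun k hk => by
      have := (Finset.sum_eq_zero_iff_of_nonneg
        fun k hk => div_nonneg (sq_nonneg (f k)) (hy k hk).le).mp hN0.symm k hk
      simpa [(hy k hk).ne'] using this
    have hF0 : F = 0 := Finset.sum_eq_zero fun k hk => by rw [hf k hk, zero_mul]
    rw [hF0, zero_mul, neg_zero]
    exact Finset.sum_nonneg fun k hk => mul_nonneg (hy k hk).le (sq_nonneg _)
  · set τ := 2 * F / N with hτ
    have hτN : τ * N = 2 * F := by rw [hτ]; field_simp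
    have e1 : ∑ k ∈ s, f k * (c k - τ * (f k / y k)) = F - τ * N := by
      rw [hF, hN, Finset.mul_sum, ← Finset.sum_sub_distrib]
      exact Finset.sum_congr rfl fun k _ => by ring
    have e2 : ∑ k ∈ s, h k * (c k - τ * (f k / y k)) =
        ∑ k ∈ s, h k * c k - τ * ∑ k ∈ s, f k * h k / y k := by
      rw [Finset.mul_sum, ← Finset.sum_sub_distrib]
      exact Finset.sum_congr rfl fun k _ => by ring
    have e3 : ∑ k ∈ s, y k * (c k - τ * (f k / y k)) ^ 2 =
        ∑ k ∈ s, y k * c k ^ 2 - 2 * τ * F + τ ^ 2 * N := by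
      rw [hF, hN, Finset.mul_sum, Finset.mul_sum, ← Finset.sum_sub_distrib,
        ← Finset.sum_add_distrib]
      exact Finset.sum_congr rfl fun k hk => by
        have := (hy k hk).ne'
        field_simp
        ring
    have key := H fun k => c k - τ * (f k / y k)
    rw [e1, e2, e3] at key
    have hτF : 0 ≤ τ * F := by
      rw [hτ, div_mul_eq_mul_div]
      exact div_nonneg (by nlinarith [sq_nonneg F]) hN0.le
    have := mul_nonneg hτF hfh
    have e4 : τ ^ 2 * N = 2 * τ * F := by rw [sq, mul_assoc, hτN]; ring
    have e5 : F - τ * N = -F := by rw [hτN]; ring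
    rw [e4, e5] at key
    nlinarith

section RelativePerturbation

variable {d : ℕ} {u uh : Fin d → Fin d → ℝ} {s sh G : Fin d → ℝ} {j : Fin d} {g δ : ℝ}

/-- If the relative perturbation is at most `δ`, then a vector on which the first form is bounded
below by `g` and the second one is bounded above by `b` forces `(1 - δ) * g ≤ b`. -/
theorem one_sub_mul_le_of_relative_perturbation
    (hu : ∀ k l, u k ⬝ᵥ u l = if k = l then (1 : ℝ) else 0)
    (huh : ∀ k l, uh k ⬝ᵥ uh l = if k = l then (1 : ℝ) else 0)
    (hG : ∀ l, 0 < G l) (hδ0 : 0 ≤ δ) (hδ1 : δ ≤ 1)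
    (H : ∀ v, ∑ l, (u l ⬝ᵥ ((∑ k, sh k • proj (uh k)) *ᵥ v) - s l * (u l ⬝ᵥ v)) ^ 2 / G l ≤
      δ ^ 2 * ∑ l, G l * (u l ⬝ᵥ v) ^ 2)
    {ε b : ℝ} (hε : ε ^ 2 = 1) {v : Fin d → ℝ} (hv : v ≠ 0)
    (hs : ∀ l, u l ⬝ᵥ v ≠ 0 → g ≤ G l ∧ ε * s l = G l)
    (hsh : ∀ k, uh k ⬝ᵥ v ≠ 0 → ε * sh k ≤ b) : (1 - δ) * g ≤ b := by
  set w := (∑ k, sh k • proj (uh k)) *ᵥ v with hw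
  set T := ∑ l, G l * (u l ⬝ᵥ v) ^ 2 with hT
  have hT0 : 0 ≤ T := Finset.sum_nonneg fun l _ => mul_nonneg (hG l).le (sq_nonneg _)
  have hvv : 0 < v ⬝ᵥ v := by
    have := dotProduct_self_star_pos_iff.mpr hv
    simpa using this
  have hcs : (∑ l, ε * ((u l ⬝ᵥ v) * (u l ⬝ᵥ w - s l * (u l ⬝ᵥ v)))) ^ 2 ≤ (δ * T) ^ 2 := by
    calc _ ≤ T * ∑ l, (u l ⬝ᵥ w - s l * (u l ⬝ᵥ v)) ^ 2 / G l := by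
          refine Finset.sum_sq_le_sum_mul_sum_of_sq_le_mul _
            (fun l _ => mul_nonneg (hG l).le (sq_nonneg _))
            (fun l _ => div_nonneg (sq_nonneg _) (hG l).le) fun l _ => ?_
          have := (hG l).ne'
          rw [mul_pow, hε]
          refine le_of_eq ?_
          field_simp
      _ ≤ T * (δ ^ 2 * T) := mul_le_mul_of_nonneg_left (H v) hT0
      _ = (δ * T) ^ 2 := by ring
  have hlow := (abs_le_of_sq_le_sq' hcs (mul_nonneg hδ0 hT0)).1
  have hsum : ∑ l, ε * ((u l ⬝ᵥ v) * (u l ⬝ᵥ w - s l * (u l ⬝ᵥ v))) = ε * (v ⬝ᵥ w) - T := by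
    rw [dotProduct_eq_sum_of_orthonormal hu v w, hT, Finset.mul_sum, ← Finset.sum_sub_distrib]
    refine Finset.sum_congr rfl fun l _ => ?_
    by_cases h0 : u l ⬝ᵥ v = 0
    · simp [h0]
    · rw [← (hs l h0).2]
      ring
  have hgT : g * (v ⬝ᵥ v) ≤ T := by
    rw [dotProduct_eq_sum_of_orthonormal hu v v, Finset.mul_sum, hT]
    refine Finset.sum_le_sum fun l _ => ?_
    by_cases h0 : u l ⬝ᵥ v = 0
    · simp [h0]
    · rw [← sq]
      exact mul_le_mul_of_nonneg_right (hs l h0).1 (sq_nonneg _)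
  have hup : ε * (v ⬝ᵥ w) ≤ b * (v ⬝ᵥ v) := by
    rw [dotProduct_eq_sum_of_orthonormal huh v w, dotProduct_eq_sum_of_orthonormal huh v v,
      Finset.mul_sum, Finset.mul_sum]
    refine Finset.sum_le_sum fun k _ => ?_
    rw [hw, dotProduct_sum_smul_proj_mulVec huh, if_pos (Finset.mem_univ k)]
    by_cases h0 : uh k ⬝ᵥ v = 0
    · simp [h0]
    · nlinarith [mul_le_mul_of_nonneg_right (hsh k h0) (sq_nonneg (uh k ⬝ᵥ v))]
  refine le_of_mul_le_mul_right ?_ hvv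
  nlinarith [mul_le_mul_of_nonneg_left hgT (sub_nonneg.mpr hδ1)]

/-- Eigenvalue separation: all eigenvalues of the perturbed operator except the `j`-th one keep
distance `(1 - δ) * g` from zero. -/
theorem one_sub_mul_le_abs_of_relative_perturbation
    (hu : ∀ k l, u k ⬝ᵥ u l = if k = l then (1 : ℝ) else 0)
    (huh : ∀ k l, uh k ⬝ᵥ uh l = if k = l then (1 : ℝ) else 0)
    (hs : Antitone s) (hsh : Antitone sh) (hsj : s j = 0)
    (hG : ∀ l, 0 < G l) (hgG : ∀ l, g ≤ G l) (hGs : ∀ l, l ≠ j → G l = |s l|)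
    (hδ0 : 0 ≤ δ) (hδ1 : δ ≤ 1)
    (H : ∀ v, ∑ l, (u l ⬝ᵥ ((∑ k, sh k • proj (uh k)) *ᵥ v) - s l * (u l ⬝ᵥ v)) ^ 2 / G l ≤
      δ ^ 2 * ∑ l, G l * (u l ⬝ᵥ v) ^ 2) {k : Fin d} (hk : k ≠ j) :
    (1 - δ) * g ≤ |sh k| := by
  have hkd := k.isLt
  rcases lt_or_gt_of_ne hk with hkj | hkj
  · obtain ⟨v, hv, hv1, hv2⟩ := exists_ne_zero_of_card_lt (u := u) (v := uh)
      (Finset.Ioi k) (Finset.Iio k) (by rw [Fin.card_Ioi, Fin.card_Iio]; omega)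
    refine le_trans ?_ (le_abs_self _)
    refine one_sub_mul_le_of_relative_perturbation hu huh hG hδ0 hδ1 H (ε := 1) (by norm_num) hv
      (fun l hl => ⟨hgG l, ?_⟩) fun m hm => ?_
    · have hlk : l ≤ k := not_lt.mp fun h => hl (hv1 l (Finset.mem_Ioi.mpr h))
      have hlj : l < j := hlk.trans_lt hkj
      rw [hGs l hlj.ne, one_mul, abs_of_nonneg (hsj ▸ hs hlj.le)]
    · rw [one_mul]
      exact hsh (not_lt.mp fun h => hm (hv2 m (Finset.mem_Iio.mpr h)))
  · obtain ⟨v, hv, hv1, hv2⟩ := exists_ne_zero_of_card_lt (u := u) (v := uh)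
      (Finset.Iio k) (Finset.Ioi k) (by rw [Fin.card_Ioi, Fin.card_Iio]; omega)
    refine le_trans ?_ (neg_le_abs _)
    refine one_sub_mul_le_of_relative_perturbation hu huh hG hδ0 hδ1 H (ε := -1) (by norm_num) hv
      (fun l hl => ⟨hgG l, ?_⟩) fun m hm => ?_
    · have hlk : k ≤ l := not_lt.mp fun h => hl (hv1 l (Finset.mem_Iio.mpr h))
      have hlj : j < l := hkj.trans_le hlk
      rw [hGs l hlj.ne', neg_one_mul, abs_of_nonpos (hsj ▸ hs hlj.le)]
    · have := hsh (not_lt.mp fun h => hm (hv2 m (Finset.mem_Ioi.mpr h)))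
      linarith

theorem weighted_sq_le_of_abs_eq {a v t γ g δ : ℝ} (hγ : 0 < γ) (hg : 0 < g) (hδ0 : 0 ≤ δ)
    (hδ1 : δ ≤ 1) (ht : γ = |t|) :
    2 * (1 - δ) ^ 2 * δ * g * (γ * v ^ 2) - (1 - δ) ^ 2 * δ * g ^ 2 * v ^ 2 - δ * a ^ 2 ≤
      (1 - δ) * g * ((a - t * v) ^ 2 / γ - δ ^ 2 * (γ * v ^ 2)) := by
  have ht' : t ^ 2 = γ ^ 2 := by rw [ht, sq_abs]
  have hγ' := hγ.ne'
  have key : (1 - δ) * g * ((a - t * v) ^ 2 / γ - δ ^ 2 * (γ * v ^ 2)) -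
      (2 * (1 - δ) ^ 2 * δ * g * (γ * v ^ 2) - (1 - δ) ^ 2 * δ * g ^ 2 * v ^ 2 - δ * a ^ 2) =
      (1 - δ) * g / γ * (a - (1 - δ) * t * v) ^ 2 +
        δ * (a - (1 - δ) * (g / γ) * t * v) ^ 2 := by
    rcases sq_eq_sq_iff_eq_or_eq_neg.mp ht' with rfl | rfl <;>
    · field_simp
      ring
  have h1 : 0 ≤ (1 - δ) * g / γ * (a - (1 - δ) * t * v) ^ 2 :=
    mul_nonneg (div_nonneg (mul_nonneg (sub_nonneg.mpr hδ1) hg.le) hγ.le) (sq_nonneg _)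
  have h2 : 0 ≤ δ * (a - (1 - δ) * (g / γ) * t * v) ^ 2 := mul_nonneg hδ0 (sq_nonneg _)
  linarith

theorem weighted_norm_sq_le_add_coord_sq
    (hu : ∀ k l, u k ⬝ᵥ u l = if k = l then (1 : ℝ) else 0) (hsj : s j = 0) (hg : 0 < g)
    (hG : ∀ l, 0 < G l) (hGj : G j = g) (hGs : ∀ l, l ≠ j → G l = |s l|)
    (hδ0 : 0 ≤ δ) (hδ1 : δ ≤ 1) {v w : Fin d → ℝ}
    (H : ∑ l, (u l ⬝ᵥ w - s l * (u l ⬝ᵥ v)) ^ 2 / G l ≤ δ ^ 2 * ∑ l, G l * (u l ⬝ᵥ v) ^ 2) :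
    2 * (1 - δ) ^ 2 * δ * g * ∑ l, G l * (u l ⬝ᵥ v) ^ 2 ≤
      (1 - δ) ^ 2 * δ * g ^ 2 * (v ⬝ᵥ v) + δ * (w ⬝ᵥ w) +
        (1 - δ) * δ * g ^ 2 * (u j ⬝ᵥ v) ^ 2 - (u j ⬝ᵥ w) ^ 2 := by
  have hterm : ∀ l, 2 * (1 - δ) ^ 2 * δ * g * (G l * (u l ⬝ᵥ v) ^ 2) -
      (1 - δ) ^ 2 * δ * g ^ 2 * (u l ⬝ᵥ v) ^ 2 - δ * (u l ⬝ᵥ w) ^ 2 +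
      (if l = j then (u l ⬝ᵥ w) ^ 2 - (1 - δ) * δ * g ^ 2 * (u l ⬝ᵥ v) ^ 2 else 0) ≤
      (1 - δ) * g * ((u l ⬝ᵥ w - s l * (u l ⬝ᵥ v)) ^ 2 / G l -
        δ ^ 2 * (G l * (u l ⬝ᵥ v) ^ 2)) := fun l => by
    by_cases hl : l = j
    · subst hl
      rw [if_pos rfl, hGj, hsj]
      refine le_of_eq ?_
      field_simp
      ring
    · rw [if_neg hl, add_zero]
      exact weighted_sq_le_of_abs_eq (hG l) hg hδ0 hδ1 (hGs l hl)
  have hsum := Finset.sum_le_sum fun l (_ : l ∈ Finset.univ) => hterm l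
  rw [← Finset.mul_sum, Finset.sum_sub_distrib, ← Finset.mul_sum, Finset.sum_add_distrib,
    Finset.sum_sub_distrib, Finset.sum_sub_distrib, ← Finset.mul_sum, ← Finset.mul_sum,
    ← Finset.mul_sum, Finset.sum_ite_eq' Finset.univ j, if_pos (Finset.mem_univ j)] at hsum
  rw [dotProduct_eq_sum_of_orthonormal hu v v, dotProduct_eq_sum_of_orthonormal hu w w]
  simp only [← sq]
  nlinarith [mul_nonneg (mul_nonneg (sub_nonneg.mpr hδ1) hg.le) (sub_nonneg.mpr H)]

theorem weighted_norm_sq_le_of_strict_separation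
    (hu : ∀ k l, u k ⬝ᵥ u l = if k = l then (1 : ℝ) else 0)
    (huh : ∀ k l, uh k ⬝ᵥ uh l = if k = l then (1 : ℝ) else 0)
    (hsj : s j = 0) (hg : 0 < g) (hGj : G j = g) (hgG : ∀ l, g ≤ G l)
    (hGs : ∀ l, l ≠ j → G l = |s l|) (hδ0 : 0 < δ) (hδ1 : δ < 1 / 2)
    (hsep : ∀ k, k ≠ j → (1 - δ) * g < |sh k|)
    (H : ∀ v, ∑ l, (u l ⬝ᵥ ((∑ k, sh k • proj (uh k)) *ᵥ v) - s l * (u l ⬝ᵥ v)) ^ 2 / G l ≤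
      δ ^ 2 * ∑ l, G l * (u l ⬝ᵥ v) ^ 2)
    {v : Fin d → ℝ} (hv : uh j ⬝ᵥ v = 0) :
    (1 - δ) ^ 2 * g * ∑ l, G l * (u l ⬝ᵥ v) ^ 2 ≤
      ((∑ k, sh k • proj (uh k)) *ᵥ v) ⬝ᵥ ((∑ k, sh k • proj (uh k)) *ᵥ v) := by
  have hG : ∀ l, 0 < G l := fun l => hg.trans_le (hgG l)
  have hκ : 0 < 1 - δ := by linarith
  have hadd := fun x => weighted_norm_sq_le_add_coord_sq hu hsj hg hG hGj hGs hδ0.le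
    (by linarith) (H x)
  set r := √((1 - δ) * δ) * g with hr
  have hr2 : r ^ 2 = (1 - δ) * δ * g ^ 2 := by
    rw [hr, mul_pow, Real.sq_sqrt (mul_nonneg hκ.le hδ0.le)]
  have hsq : ∀ k, k ≠ j → ((1 - δ) * g) ^ 2 < sh k ^ 2 := fun k hk => by
    rw [← sq_abs (sh k)]
    exact pow_lt_pow_left₀ (hsep k hk) (by positivity) two_ne_zero
  have hy : ∀ k ∈ Finset.univ.filter (fun k => k ≠ j),
      0 < δ * (sh k ^ 2 - (1 - δ) ^ 2 * g ^ 2) := fun k hk => by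
    have := hsq k (Finset.mem_filter.mp hk).2
    exact mul_pos hδ0 (by nlinarith)
  have hexp : ∀ c : Fin d → ℝ, ∀ x : Fin d → ℝ,
      x = ∑ k ∈ Finset.univ.filter (fun k => k ≠ j), c k • uh k →
      (u j ⬝ᵥ ((∑ k, sh k • proj (uh k)) *ᵥ x)) ^ 2 - (1 - δ) * δ * g ^ 2 * (u j ⬝ᵥ x) ^ 2 =
        (∑ k ∈ Finset.univ.filter (fun k => k ≠ j), (sh k - r) * (u j ⬝ᵥ uh k) * c k) *
        (∑ k ∈ Finset.univ.filter (fun k => k ≠ j), (sh k + r) * (u j ⬝ᵥ uh k) * c k) ∧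
      δ * (((∑ k, sh k • proj (uh k)) *ᵥ x) ⬝ᵥ ((∑ k, sh k • proj (uh k)) *ᵥ x)) -
          δ * (1 - δ) ^ 2 * g ^ 2 * (x ⬝ᵥ x) =
        ∑ k ∈ Finset.univ.filter (fun k => k ≠ j),
          δ * (sh k ^ 2 - (1 - δ) ^ 2 * g ^ 2) * c k ^ 2 := by
    intro c x hx
    have hc : ∀ k, uh k ⬝ᵥ x = if k ≠ j then c k else 0 := fun k => by
      rw [hx, dotProduct_sum_smul_of_orthonormal huh]
      simp
    have hx0 : u j ⬝ᵥ x = ∑ k ∈ Finset.univ.filter (fun k => k ≠ j), (u j ⬝ᵥ uh k) * c k := by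
      rw [hx, dotProduct_sum]
      exact Finset.sum_congr rfl fun k _ => by rw [dotProduct_smul, smul_eq_mul, mul_comm]
    have hw0 : u j ⬝ᵥ ((∑ k, sh k • proj (uh k)) *ᵥ x) =
        ∑ k ∈ Finset.univ.filter (fun k => k ≠ j), sh k * ((u j ⬝ᵥ uh k) * c k) := by
      rw [sum_smul_proj_mulVec, dotProduct_sum, Finset.sum_filter]
      refine Finset.sum_congr rfl fun k _ => ?_
      rw [dotProduct_smul, smul_eq_mul, hc]
      split_ifs <;> ring
    constructor
    · rw [← hr2, hw0, hx0, ← mul_pow, sq_sub_sq, mul_comm, Finset.mul_sum,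
        ← Finset.sum_sub_distrib, ← Finset.sum_add_distrib]
      congr 1 <;> exact Finset.sum_congr rfl fun k _ => by ring
    · rw [dotProduct_eq_sum_of_orthonormal huh, dotProduct_eq_sum_of_orthonormal huh x x,
        Finset.mul_sum, Finset.mul_sum, ← Finset.sum_sub_distrib, Finset.sum_filter]
      refine Finset.sum_congr rfl fun k _ => ?_
      rw [dotProduct_sum_smul_proj_mulVec huh, if_pos (Finset.mem_univ k), hc]
      split_ifs <;> ring
  have hv' : v = ∑ k ∈ Finset.univ.filter (fun k => k ≠ j), (uh k ⬝ᵥ v) • uh k := by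
    refine eq_of_dotProduct_eq_of_orthonormal huh fun l => ?_
    rw [dotProduct_sum_smul_of_orthonormal huh]
    by_cases hl : l = j
    · simp [hl, hv]
    · simp [hl]
  have hgT : ∀ x : Fin d → ℝ, g * (x ⬝ᵥ x) ≤ ∑ l, G l * (u l ⬝ᵥ x) ^ 2 := fun x => by
    rw [dotProduct_eq_sum_of_orthonormal hu x x, Finset.mul_sum]
    refine Finset.sum_le_sum fun l _ => ?_
    rw [← sq]
    exact mul_le_mul_of_nonneg_right (hgG l) (sq_nonneg _)
  have hrefl := neg_mul_le_of_mul_le (Finset.univ.filter (fun k => k ≠ j))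
    (fun k => δ * (sh k ^ 2 - (1 - δ) ^ 2 * g ^ 2)) (fun k => (sh k - r) * (u j ⬝ᵥ uh k))
    (fun k => (sh k + r) * (u j ⬝ᵥ uh k)) hy
    (Finset.sum_nonneg fun k hk => div_nonneg ?_ (hy k hk).le) (fun c => ?_)
    (fun k => uh k ⬝ᵥ v)
  · obtain ⟨e1, e2⟩ := hexp _ v hv'
    rw [← e1, ← e2] at hrefl
    have := hadd v
    refine le_of_mul_le_mul_left ?_ (mul_pos two_pos hδ0)
    nlinarith
  · have h1 := hsq k (Finset.mem_filter.mp hk).2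
    have h2 : (1 - δ) * δ * g ^ 2 ≤ ((1 - δ) * g) ^ 2 := by
      rw [mul_pow]
      exact mul_le_mul_of_nonneg_right (by nlinarith) (sq_nonneg g)
    have : (sh k - r) * (u j ⬝ᵥ uh k) * ((sh k + r) * (u j ⬝ᵥ uh k)) =
        (sh k ^ 2 - r ^ 2) * (u j ⬝ᵥ uh k) ^ 2 := by ring
    rw [this, hr2]
    exact mul_nonneg (by linarith) (sq_nonneg _)
  · obtain ⟨e1, e2⟩ := hexp c _ rfl
    rw [← e1, ← e2]
    have h1 := hadd (∑ k ∈ Finset.univ.filter (fun k => k ≠ j), c k • uh k)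
    have h2 := mul_le_mul_of_nonneg_left
      (hgT (∑ k ∈ Finset.univ.filter (fun k => k ≠ j), c k • uh k))
      (by positivity : 0 ≤ 2 * (1 - δ) ^ 2 * δ * g)
    nlinarith

theorem weighted_norm_sq_le_of_relative_perturbation
    (hu : ∀ k l, u k ⬝ᵥ u l = if k = l then (1 : ℝ) else 0)
    (huh : ∀ k l, uh k ⬝ᵥ uh l = if k = l then (1 : ℝ) else 0)
    (hsj : s j = 0) (hg : 0 < g) (hGj : G j = g) (hgG : ∀ l, g ≤ G l)
    (hGs : ∀ l, l ≠ j → G l = |s l|) (hδ0 : 0 ≤ δ) (hδ1 : δ < 1 / 2)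
    (hsep : ∀ k, k ≠ j → (1 - δ) * g ≤ |sh k|)
    (H : ∀ v, ∑ l, (u l ⬝ᵥ ((∑ k, sh k • proj (uh k)) *ᵥ v) - s l * (u l ⬝ᵥ v)) ^ 2 / G l ≤
      δ ^ 2 * ∑ l, G l * (u l ⬝ᵥ v) ^ 2)
    {v : Fin d → ℝ} (hv : uh j ⬝ᵥ v = 0) :
    (1 - δ) ^ 2 * g * ∑ l, G l * (u l ⬝ᵥ v) ^ 2 ≤
      ((∑ k, sh k • proj (uh k)) *ᵥ v) ⬝ᵥ ((∑ k, sh k • proj (uh k)) *ᵥ v) := by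
  have hcont : Filter.Tendsto (fun δ' : ℝ => (1 - δ') ^ 2 * g * ∑ l, G l * (u l ⬝ᵥ v) ^ 2)
      (nhdsWithin δ (Set.Ioi δ)) (nhds ((1 - δ) ^ 2 * g * ∑ l, G l * (u l ⬝ᵥ v) ^ 2)) :=
    (Continuous.tendsto (by fun_prop) δ).mono_left nhdsWithin_le_nhds
  refine le_of_tendsto hcont ?_
  filter_upwards [Ioo_mem_nhdsGT hδ1] with δ' hδ'
  refine weighted_norm_sq_le_of_strict_separation hu huh hsj hg hGj hgG hGs
    (hδ0.trans_lt hδ'.1) hδ'.2 (fun k hk => lt_of_lt_of_le ?_ (hsep k hk)) (fun x => ?_) hv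
  · exact mul_lt_mul_of_pos_right (by linarith [hδ'.1]) hg
  · refine (H x).trans (mul_le_mul_of_nonneg_right (pow_le_pow_left₀ hδ0 hδ'.1.le 2) ?_)
    exact Finset.sum_nonneg fun l _ => mul_nonneg (hg.le.trans (hgG l)) (sq_nonneg _)

end RelativePerturbation

/-- The absolute spectral gaps seen from the `j`-th eigenvalue, with `g` at `j` itself. -/
noncomputable def gapWeight {d : ℕ} (lam : Fin d → ℝ) (j : Fin d) (g : ℝ) (l : Fin d) : ℝ :=
  if l = j then g else |lam l - lam j|

theorem sqrtAbsRes_add_smul_proj {d : ℕ} (lam : Fin d → ℝ) (u : Fin d → Fin d → ℝ) (j : Fin d)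
    (g : ℝ) : sqrtAbsRes lam u j + (√g)⁻¹ • proj (u j) =
      ∑ l, (√(gapWeight lam j g l))⁻¹ • proj (u l) := by
  rw [← Finset.sum_filter_not_add_sum_filter Finset.univ (fun l => l = j), sqrtAbsRes]
  congr 1
  · refine Finset.sum_congr rfl fun l hl => ?_
    rw [gapWeight, if_neg (Finset.mem_filter.mp hl).2]
  · rw [Finset.filter_eq' Finset.univ j, if_pos (Finset.mem_univ j), Finset.sum_singleton,
      gapWeight, if_pos rfl]

theorem sum_sq_div_gapWeight_le {d : ℕ} {lam : Fin d → ℝ} {u : Fin d → Fin d → ℝ}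
    (hu : ∀ k l, u k ⬝ᵥ u l = if k = l then (1 : ℝ) else 0) {j : Fin d} {g : ℝ}
    (hG : ∀ l, 0 < gapWeight lam j g l) (E : Matrix (Fin d) (Fin d) ℝ) (v : Fin d → ℝ) :
    ∑ l, (u l ⬝ᵥ (E *ᵥ v)) ^ 2 / gapWeight lam j g l ≤
      delta lam u j g E ^ 2 * ∑ l, gapWeight lam j g l * (u l ⬝ᵥ v) ^ 2 := by
  set G := gapWeight lam j g
  set D := ∑ l, (√(G l))⁻¹ • proj (u l) with hD
  set y := ∑ l, (√(G l) * (u l ⬝ᵥ v)) • u l with hy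
  have hyl : ∀ l, u l ⬝ᵥ y = √(G l) * (u l ⬝ᵥ v) := fun l => by
    rw [hy, dotProduct_sum_smul_of_orthonormal hu, if_pos (Finset.mem_univ l)]
  have hDl : ∀ x l, u l ⬝ᵥ (D *ᵥ x) = (√(G l))⁻¹ * (u l ⬝ᵥ x) := fun x l => by
    rw [hD, dotProduct_sum_smul_proj_mulVec hu, if_pos (Finset.mem_univ l)]
  have hDy : D *ᵥ y = v := eq_of_dotProduct_eq_of_orthonormal hu fun l => by
    rw [hDl, hyl, inv_mul_cancel_left₀ (Real.sqrt_pos.mpr (hG l)).ne']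
  have key := dotProduct_mulVec_self_le (D * E * D) y
  rw [← Matrix.mulVec_mulVec, ← Matrix.mulVec_mulVec, hDy,
    dotProduct_eq_sum_of_orthonormal hu, dotProduct_eq_sum_of_orthonormal hu y y] at key
  rw [delta, sqrtAbsRes_add_smul_proj]
  convert key using 3 with l _ l _
  · rw [hDl, ← sq, mul_pow, inv_pow, Real.sq_sqrt (hG l).le, div_eq_inv_mul]
  · rw [hyl, ← sq, mul_pow, Real.sq_sqrt (hG _).le]

theorem stmt16 {d : ℕ} (lam : Fin d → ℝ) (u : Fin d → Fin d → ℝ)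
    (hON : ∀ k l, u k ⬝ᵥ u l = if k = l then (1 : ℝ) else 0)
    (hlam : Antitone lam)
    (E : Matrix (Fin d) (Fin d) ℝ) (hE : E.IsSymm)
    (j : Fin d) (gj : ℝ) (hgj_pos : 0 < gj)
    (hgj : IsLeast {x : ℝ | ∃ k, k ≠ j ∧ x = |lam k - lam j|} gj)
    (lamh : Fin d → ℝ) (uh : Fin d → Fin d → ℝ)
    (hONh : ∀ k l, uh k ⬝ᵥ uh l = if k = l then (1 : ℝ) else 0)
    (hlamh : Antitone lamh)
    (hdecomp : (∑ k, lam k • proj (u k)) + E = ∑ k, lamh k • proj (uh k))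
    (hdelta : delta lam u j gj E < 1 / 2) :
    ∀ k : ℕ, 1 ≤ k →
      opNorm (invSqrtAbsRes lam u j *
          (∑ l ∈ Finset.univ.filter (fun l => l ≠ j),
            (lamh l - lam j)⁻¹ • proj (uh l)) ^ k) ≤
        (1 - delta lam u j gj E) ^ (-(k : ℤ)) * gj ^ (-(k : ℤ)) * Real.sqrt gj := by
  set δ := delta lam u j gj E
  set G := gapWeight lam j gj
  set s : Fin d → ℝ := fun l => lam l - lam j with hs
  set sh : Fin d → ℝ := fun l => lamh l - lam j with hsh
  have hδ0 : 0 ≤ δ := norm_nonneg _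
  have hκ : 0 < 1 - δ := by linarith
  have hGj : G j = gj := if_pos rfl
  have hGs : ∀ l, l ≠ j → G l = |s l| := fun l hl => if_neg hl
  have hgG : ∀ l, gj ≤ G l := fun l => by
    by_cases hl : l = j
    · rw [hl, hGj]
    · rw [hGs l hl]
      exact hgj.2 ⟨l, hl, rfl⟩
  have hG : ∀ l, 0 < G l := fun l => hgj_pos.trans_le (hgG l)
  have hsj : s j = 0 := sub_self _
  have hE' : E = (∑ k, sh k • proj (uh k)) - ∑ k, s k • proj (u k) := by
    simp only [hs, hsh, sub_smul, Finset.sum_sub_distrib, ← Finset.smul_sum, sum_proj_eq_one hON,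
      sum_proj_eq_one hONh]
    rw [← hdecomp]
    abel
  have H : ∀ v, ∑ l, (u l ⬝ᵥ ((∑ k, sh k • proj (uh k)) *ᵥ v) - s l * (u l ⬝ᵥ v)) ^ 2 / G l ≤
      δ ^ 2 * ∑ l, G l * (u l ⬝ᵥ v) ^ 2 := fun v => by
    refine le_of_eq_of_le (Finset.sum_congr rfl fun l _ => ?_)
      (sum_sq_div_gapWeight_le hON hG E v)
    rw [hE', Matrix.sub_mulVec, dotProduct_sub, dotProduct_sum_smul_proj_mulVec hON,
      if_pos (Finset.mem_univ l)]
  have hsep : ∀ k, k ≠ j → (1 - δ) * gj ≤ |sh k| := fun k hk =>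
    one_sub_mul_le_abs_of_relative_perturbation hON hONh
      (fun a b hab => sub_le_sub_right (hlam hab) _) (fun a b hab => sub_le_sub_right (hlamh hab) _)
      hsj hG hgG hGs hδ0 (by linarith) H hk
  have hsh0 : ∀ k, k ≠ j → 0 < |sh k| := fun k hk => (mul_pos hκ hgj_pos).trans_le (hsep k hk)
  set R := ∑ l ∈ Finset.univ.filter (fun l => l ≠ j), (sh l)⁻¹ • proj (uh l) with hR
  have hRl : ∀ x l, uh l ⬝ᵥ (R *ᵥ x) = if l ≠ j then (sh l)⁻¹ * (uh l ⬝ᵥ x) else 0 := fun x l => by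
    rw [hR, dotProduct_sum_smul_proj_mulVec hONh]
    simp
  have hRnorm : opNorm R ≤ ((1 - δ) * gj)⁻¹ := by
    refine opNorm_le_of_dotProduct_le (by positivity) fun x => ?_
    rw [dotProduct_eq_sum_of_orthonormal hONh, dotProduct_eq_sum_of_orthonormal hONh x x,
      Finset.mul_sum]
    refine Finset.sum_le_sum fun l _ => ?_
    rw [hRl]
    split_ifs with hl
    · rw [← sq, ← sq, mul_pow, ← sq_abs (sh l)⁻¹, abs_inv]
      gcongr
      exact hsep l hl
    · rw [mul_zero]
      exact mul_nonneg (sq_nonneg _) (mul_self_nonneg _)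
  have hMRnorm : opNorm (invSqrtAbsRes lam u j * R) ≤ ((1 - δ) * √gj)⁻¹ := by
    refine opNorm_le_of_dotProduct_le (by positivity) fun x => ?_
    have hcore := weighted_norm_sq_le_of_relative_perturbation hON hONh hsj hgj_pos hGj hgG hGs hδ0
      hdelta hsep H (v := R *ᵥ x) (by rw [hRl, if_neg (not_not.mpr rfl)])
    have hw : ((∑ k, sh k • proj (uh k)) *ᵥ (R *ᵥ x)) ⬝ᵥ
        ((∑ k, sh k • proj (uh k)) *ᵥ (R *ᵥ x)) ≤ x ⬝ᵥ x := by
      rw [dotProduct_eq_sum_of_orthonormal hONh, dotProduct_eq_sum_of_orthonormal hONh x x]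
      refine Finset.sum_le_sum fun l _ => ?_
      rw [dotProduct_sum_smul_proj_mulVec hONh, if_pos (Finset.mem_univ l), hRl]
      split_ifs with hl
      · rw [mul_inv_cancel_left₀ (abs_pos.mp (hsh0 l hl))]
      · rw [mul_zero, mul_zero]
        exact mul_self_nonneg _
    have hM : (invSqrtAbsRes lam u j *ᵥ (R *ᵥ x)) ⬝ᵥ (invSqrtAbsRes lam u j *ᵥ (R *ᵥ x)) ≤
        ∑ l, G l * (u l ⬝ᵥ (R *ᵥ x)) ^ 2 := by
      rw [dotProduct_eq_sum_of_orthonormal hON]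
      refine Finset.sum_le_sum fun l _ => ?_
      rw [invSqrtAbsRes, dotProduct_sum_smul_proj_mulVec hON]
      split_ifs with hl
      · rw [← sq, mul_pow, Real.sq_sqrt (abs_nonneg _), hGs l (Finset.mem_filter.mp hl).2]
      · rw [mul_zero]
        exact mul_nonneg (hG l).le (sq_nonneg _)
    rw [← Matrix.mulVec_mulVec, inv_pow, mul_pow, Real.sq_sqrt hgj_pos.le,
      le_inv_mul_iff₀ (by positivity)]
    exact (mul_le_mul_of_nonneg_left hM (by positivity)).trans (hcore.trans hw)
  intro k hk
  obtain ⟨n, rfl⟩ := Nat.exists_eq_add_of_le' hk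
  refine (opNorm_mul_pow_succ_le hMRnorm hRnorm n).trans (le_of_eq ?_)
  have hsq : √gj ≠ 0 := (Real.sqrt_pos.mpr hgj_pos).ne'
  rw [_root_.zpow_neg, _root_.zpow_neg, zpow_natCast, zpow_natCast, inv_pow, mul_pow, pow_succ,
    pow_succ]
  field_simp
  rw [Real.sq_sqrt hgj_pos.le]
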